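/- arXiv:math/0609760 — 2 statements merged into one kernel-verified Lean document; each statement's English description precedes it below -/
import Mathlib

section
/- Let R = M_{n,m}(F) be a non-trivial matrix superalgebra with a superinvolution * over an algebraically closed field F of characteristic zero, and let G be a finite abelian group. Then R admits no fine G-grading that is compatible with the superalgebra structure and respected by * (i.e., there is no fine G-grading R = ⊕_{g∈G} R_g with R_g = (R_g ∩ R₀) ⊕ (R_g ∩ R₁) and (R_g)* = R_g for all g ∈ G). -/
open scoped TensorProduct

/-- A `G`-grading on an `F`-algebra `R`: an internal direct sum vector-space
decomposition `R = ⊕_{g ∈ G} A g` with `A g * A h ⊆ A (g * h)`. -/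
structure IsAlgGrading (F : Type*) [Field F] (G : Type*) [Group G] [DecidableEq G]
    {R : Type*} [Ring R] [Algebra F R] (A : G → Submodule F R) : Prop where
  internal : DirectSum.IsInternal A
  mul_mem : ∀ {g h : G} {x y : R}, x ∈ A g → y ∈ A h → x * y ∈ A (g * h)

/-- A superalgebra structure on an `F`-algebra `R`: a `ℤ₂`-grading `R = R₀ ⊕ R₁`. -/
structure IsSuperGrading (F : Type*) [Field F] {R : Type*} [Ring R] [Algebra F R]
    (S : ZMod 2 → Submodule F R) : Prop where
  internal : DirectSum.IsInternal S
  mul_mem : ∀ {p q : ZMod 2} {x y : R}, x ∈ S p → y ∈ S q → x * y ∈ S (p + q)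

/-- The sign `(-1)^{pq}` occurring in the superinvolution identity. -/
def superSign (F : Type*) [Field F] (p q : ZMod 2) : F := if p = 1 ∧ q = 1 then -1 else 1

/-- A superinvolution on a superalgebra `R = ⊕ S p`:
a `ℤ₂`-graded linear map of order 2 with `(ab)* = (-1)^{|a||b|} b* a*`. -/
structure IsSuperinvolution (F : Type*) [Field F] {R : Type*} [Ring R] [Algebra F R]
    (S : ZMod 2 → Submodule F R) (φ : R →ₗ[F] R) : Prop where
  invol : ∀ x, φ (φ x) = x
  graded : ∀ (p : ZMod 2) (x : R), x ∈ S p → φ x ∈ S p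
  anti : ∀ {p q : ZMod 2} {x y : R}, x ∈ S p → y ∈ S q →
    φ (x * y) = superSign F p q • (φ y * φ x)

/-- A grading is fine if every nonzero homogeneous component is one-dimensional. -/
def IsFineGrading (F : Type*) [Field F] {G R : Type*} [Group G] [Ring R] [Algebra F R]
    (A : G → Submodule F R) : Prop :=
  ∀ g, A g ≠ ⊥ → Module.finrank F (A g) = 1

/-- Compatibility of a `G`-grading with a superalgebra structure:
`R_g = (R_g ∩ R₀) ⊕ (R_g ∩ R₁)`. -/
def SuperCompatible (F : Type*) [Field F] {G R : Type*} [Group G] [Ring R] [Algebra F R]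
    (A : G → Submodule F R) (S : ZMod 2 → Submodule F R) : Prop :=
  ∀ g, A g = (A g ⊓ S 0) ⊔ (A g ⊓ S 1)

/-- The homogeneous component of degree `g` of the elementary grading on a matrix
algebra determined by the tuple `t`: it is spanned by the matrix units `E a b` with
`(t a)⁻¹ * t b = g`. -/
def elemGrading (F : Type*) [Field F] {G : Type*} [Group G] {ι : Type*} (t : ι → G) (g : G) :
    Submodule F (Matrix ι ι F) where
  carrier := {X | ∀ a b, (t a)⁻¹ * t b ≠ g → X a b = 0}
  add_mem' := by
    intro X Y hX hY a b h
    simp only [Matrix.add_apply, hX a b h, hY a b h, add_zero]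
  zero_mem' := by intro a b h; simp
  smul_mem' := by
    intro c X hX a b h
    simp only [Matrix.smul_apply, hX a b h, smul_zero]

/-- The `ℤ₂`-components of the matrix superalgebra structure determined by a parity
function `π` on the indices: the component of parity `p` consists of the matrices
supported on positions `(a,b)` with `π a + π b = p`. -/
def parSuper (F : Type*) [Field F] {ι : Type*} (π : ι → ZMod 2) (p : ZMod 2) :
    Submodule F (Matrix ι ι F) where
  carrier := {X | ∀ a b, π a + π b ≠ p → X a b = 0}
  add_mem' := by
    intro X Y hX hY a b h
    simp only [Matrix.add_apply, hX a b h, hY a b h, add_zero]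
  zero_mem' := by intro a b h; simp
  smul_mem' := by
    intro c X hX a b h
    simp only [Matrix.smul_apply, hX a b h, smul_zero]

/-- The parity function of the matrix superalgebra `M_{n,m}(F)`, with indices
`Fin n ⊕ Fin m`: the first block is even, the second odd. -/
def matPar {n m : ℕ} : Fin n ⊕ Fin m → ZMod 2 := Sum.elim (fun _ => 0) (fun _ => 1)

/-- The superalgebra structure of the matrix superalgebra `M_{n,m}(F)`: the even part
consists of block-diagonal, the odd part of block-antidiagonal matrices. -/
def matSuper (F : Type*) [Field F] (n m : ℕ) (p : ZMod 2) :
    Submodule F (Matrix (Fin n ⊕ Fin m) (Fin n ⊕ Fin m) F) :=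
  parSuper F matPar p

/-- The `ℤ₂`-components of the superalgebra structure of type `Q`, determined by the
index involution `sw` (which exchanges the two copies inside each block):
the even part consists of `sw`-invariant matrices, the odd part of `sw`-anti-invariant ones. -/
def swSuper (F : Type*) [Field F] {ι : Type*} (sw : ι → ι) (p : ZMod 2) :
    Submodule F (Matrix ι ι F) where
  carrier := {X | ∀ a b, X (sw a) (sw b) = (if p = 0 then 1 else -1) * X a b}
  add_mem' := by
    intro X Y hX hY a b
    simp only [Matrix.add_apply, hX a b, hY a b, mul_add]
  zero_mem' := by intro a b; simp
  smul_mem' := by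
    intro c X hX a b
    simp only [Matrix.smul_apply, hX a b, smul_eq_mul]
    ring

/-- The supertranspose `X ↦ X^τ = [[Aᵗ, Cᵗ], [-Bᵗ, Dᵗ]]`, for a general parity
function `π` on the matrix indices. -/
def tauL (F : Type*) [Field F] {ι : Type*} (π : ι → ZMod 2) :
    Matrix ι ι F →ₗ[F] Matrix ι ι F where
  toFun X := fun a b => (if π a = 1 ∧ π b = 0 then (-1 : F) else 1) * X b a
  map_add' X Y := by funext a b; exact mul_add _ _ _
  map_smul' c X := by
    funext a b
    exact mul_left_comm _ _ _

/-!
A superinvolution `φ` that respects a fine grading acts on each one-dimensional component as `±1`.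
Comparing `φ (x * y)` with `± φ y * φ x` therefore shows that bihomogeneous elements commute up to
sign. If `x` is bihomogeneous and odd, then `x * x` commutes with everything, hence is a scalar and
is fixed by `φ`; but the superinvolution identity gives `φ (x * x) = -(x * x)`, so `x * x = 0`.
Commuting up to sign turns this into `x * y * x = 0` for all `y`, and semiprimeness forces `x = 0`.
-/

section CommuteUpToSign

/-- Two elements of a ring commute up to sign if `x * y = y * x` or `x * y = -(y * x)`; the second
alternative is phrased through `SemiconjBy` to make its calculus available. -/
def CommuteUpToSign {R : Type*} [Ring R] (x y : R) : Prop :=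
  Commute x y ∨ SemiconjBy x y (-y)

variable {R : Type*} [Ring R] {x y : R}

theorem CommuteUpToSign.mul_self_commute (h : CommuteUpToSign x y) : Commute (x * x) y := by
  rcases h with h | h
  · exact h.mul_left h
  · have hneg : SemiconjBy (x * x) y (- -y) := h.neg_right.mul_left h
    rwa [neg_neg] at hneg

theorem CommuteUpToSign.mul_mul_self_eq_zero (h : CommuteUpToSign x y) (hx : x * x = 0) :
    x * y * x = 0 := by
  rcases h with h | h <;> simp [h.eq, mul_assoc, hx]

end CommuteUpToSign

section Semiprime

/-- A ring is semiprime if `x R x = 0` implies `x = 0`; equivalently, it has no nonzero nilpotent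
two-sided ideals. -/
def IsSemiprimeRing (R : Type*) [Ring R] : Prop :=
  ∀ x : R, (∀ y, x * y * x = 0) → x = 0

theorem isSemiprimeRing_of_isSimpleRing (R : Type*) [Ring R] [IsSimpleRing R] :
    IsSemiprimeRing R := by
  intro x hx
  by_contra hx0
  have hspan : ∀ z ∈ TwoSidedIdeal.span {x}, ∀ y, x * y * z = 0 := by
    intro z hz
    induction hz using TwoSidedIdeal.span_induction with
    | mem z hz => rwa [Set.mem_singleton_iff.mp hz]
    | zero => simp
    | add a b _ _ ha hb => intro y; rw [mul_add, ha, hb, add_zero]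
    | neg a _ ha => intro y; rw [mul_neg, ha, neg_zero]
    | left_absorb a b _ hb => intro y; rw [← mul_assoc, mul_assoc x, hb]
    | right_absorb a b _ hb => intro y; rw [← mul_assoc, hb, zero_mul]
  have hone : (1 : R) ∈ TwoSidedIdeal.span {x} :=
    IsSimpleRing.one_mem_of_ne_zero_mem _ hx0 (TwoSidedIdeal.subset_span rfl)
  exact hx0 (by simpa using hspan 1 hone 1)

end Semiprime

theorem map_eq_or_eq_neg_of_finrank_eq_one {F V : Type*} [Field F] [AddCommGroup V] [Module F V]
    {φ : V →ₗ[F] V} (hφ : Function.Involutive φ) {W : Submodule F V}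
    (hW : Module.finrank F W = 1) (hφW : ∀ x ∈ W, φ x ∈ W) {x : V} (hx : x ∈ W) :
    φ x = x ∨ φ x = -x := by
  rcases eq_or_ne x 0 with rfl | hx0
  · simp
  have hxW : (⟨x, hx⟩ : W) ≠ 0 := by simpa using hx0
  obtain ⟨c, hc⟩ := (finrank_eq_one_iff_of_nonzero' _ hxW).mp hW ⟨φ x, hφW x hx⟩
  have hcx : φ x = c • x := (congrArg Subtype.val hc).symm
  have hcc : (c * c) • x = (1 : F) • x := by
    rw [mul_smul, ← hcx, ← map_smul, ← hcx, hφ, one_smul]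
  rcases mul_self_eq_one_iff.mp (smul_left_injective F hx0 hcc) with rfl | rfl
  · exact .inl (by simpa using hcx)
  · exact .inr (by simpa using hcx)

theorem isInternal_zmod_two_iff_isCompl {F V : Type*} [Field F] [AddCommGroup V] [Module F V]
    (S : ZMod 2 → Submodule F V) : DirectSum.IsInternal S ↔ IsCompl (S 0) (S 1) := by
  have huniv : (Set.univ : Set (ZMod 2)) = {0, 1} := (Set.eq_univ_iff_forall.mpr (by decide)).symm
  exact DirectSum.isInternal_submodule_iff_isCompl S zero_ne_one huniv

theorem superSign_eq_one_or_eq_neg_one (F : Type*) [Field F] (p q : ZMod 2) :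
    superSign F p q = 1 ∨ superSign F p q = -1 := by
  unfold superSign
  split_ifs <;> simp

section Superalgebra

variable {F G R : Type*} [Field F] [Group G] [Ring R] [Algebra F R]
  {A : G → Submodule F R} {S : ZMod 2 → Submodule F R} {φ : R →ₗ[F] R} {x y : R}

namespace IsSuperGrading

theorem isCompl (hS : IsSuperGrading F S) : IsCompl (S 0) (S 1) :=
  (isInternal_zmod_two_iff_isCompl S).mp hS.internal

theorem one_mem (hS : IsSuperGrading F S) : (1 : R) ∈ S 0 := by
  have eq_zero : ∀ {z}, z ∈ S 0 → z ∈ S 1 → z = 0 :=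
    fun h₀ h₁ ↦ Submodule.disjoint_def.mp hS.isCompl.disjoint _ h₀ h₁
  obtain ⟨a, ha, b, hb, hab⟩ : ∃ a ∈ S 0, ∃ b ∈ S 1, a + b = 1 :=
    Submodule.mem_sup.mp (hS.isCompl.sup_eq_top ▸ Submodule.mem_top)
  have hmul : ∀ z, z * b = z - z * a := fun z ↦ by
    rw [eq_sub_iff_add_eq', ← mul_add, hab, mul_one]
  have hab0 : a * b = 0 :=
    eq_zero (hmul a ▸ sub_mem ha (hS.mul_mem ha ha)) (hS.mul_mem ha hb)
  have hbb0 : b * b = 0 :=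
    eq_zero (hS.mul_mem hb hb) (hmul b ▸ sub_mem hb (hS.mul_mem hb ha))
  have hb0 : b = 0 := by
    calc b = (a + b) * b := by rw [hab, one_mul]
      _ = 0 := by rw [add_mul, hab0, hbb0, add_zero]
  rwa [← hab, hb0, add_zero]

end IsSuperGrading

namespace IsSuperinvolution

theorem map_one (hφ : IsSuperinvolution F S φ) (hS : IsSuperGrading F S) : φ 1 = 1 := by
  have hmul : ∀ y, φ 1 * φ y = φ y := by
    intro y
    have hy : y ∈ ⨆ p, S p := hS.internal.submodule_iSup_eq_top ▸ Submodule.mem_top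
    refine Submodule.iSup_induction S (motive := fun y ↦ φ 1 * φ y = φ y) hy ?_ (by simp) ?_
    · exact fun p y hy ↦ by simpa [superSign] using (hφ.anti hy hS.one_mem).symm
    · exact fun y z hy hz ↦ by rw [map_add, mul_add, hy, hz]
  simpa [hφ.invol] using hmul (φ 1)

theorem commuteUpToSign (hφ : IsSuperinvolution F S φ) {p q : ZMod 2} (hx : x ∈ S p)
    (hy : y ∈ S q) (hφx : φ x = x ∨ φ x = -x) (hφy : φ y = y ∨ φ y = -y)
    (hφxy : φ (x * y) = x * y ∨ φ (x * y) = -(x * y)) : CommuteUpToSign x y := by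
  have hφyx : φ y * φ x = y * x ∨ φ y * φ x = -(y * x) := by
    rcases hφx with hφx | hφx <;> rcases hφy with hφy | hφy <;> simp [hφx, hφy]
  have hanti : φ (x * y) = y * x ∨ φ (x * y) = -(y * x) := by
    rw [hφ.anti hx hy]
    rcases superSign_eq_one_or_eq_neg_one F p q with hs | hs <;>
      rcases hφyx with h | h <;> simp [hs, h]
  have hxy : x * y = y * x ∨ x * y = -(y * x) := by
    rcases hφxy with h | h <;> rw [h] at hanti
    · exact hanti
    · simpa [neg_eq_iff_eq_neg, or_comm] using hanti
  exact hxy.imp id fun h ↦ h.trans (neg_mul y x).symm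

theorem map_mul_self_of_odd (hφ : IsSuperinvolution F S φ) (hx : x ∈ S 1)
    (hφx : φ x = x ∨ φ x = -x) : φ (x * x) = -(x * x) := by
  rw [hφ.anti hx hx]
  rcases hφx with hφx | hφx <;> simp [superSign, hφx]

theorem mul_self_eq_zero_of_odd [NeZero (2 : F)] [Algebra.IsCentral F R]
    (hφ : IsSuperinvolution F S φ) (hS : IsSuperGrading F S) (hx : x ∈ S 1)
    (hφx : φ x = x ∨ φ x = -x) (hcomm : ∀ y, Commute (x * x) y) : x * x = 0 := by
  have hcenter : x * x ∈ Subalgebra.center F R :=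
    Subalgebra.mem_center_iff.mpr fun y ↦ (hcomm y).symm.eq
  obtain ⟨c, hc⟩ := Algebra.mem_bot.mp (Algebra.IsCentral.out hcenter)
  have hfix : φ (x * x) = x * x := by
    rw [← hc, Algebra.algebraMap_eq_smul_one, map_smul, hφ.map_one hS]
  have hneg : x * x = -(x * x) := hfix.symm.trans (hφ.map_mul_self_of_odd hx hφx)
  have htwo : (2 : F) • (x * x) = 0 := by rw [two_smul, ← eq_neg_iff_add_eq_zero, ← hneg]
  exact (smul_eq_zero.mp htwo).resolve_left two_ne_zero

end IsSuperinvolution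

theorem SuperCompatible.induction (h : SuperCompatible F A S) (hA : ⨆ g, A g = ⊤)
    {P : R → Prop} (mem : ∀ g p, ∀ y ∈ A g, y ∈ S p → P y) (zero : P 0)
    (add : ∀ y z, P y → P z → P (y + z)) (y : R) : P y := by
  have hy : y ∈ ⨆ g, A g := hA ▸ Submodule.mem_top
  refine Submodule.iSup_induction A (motive := P) hy (fun g y hy ↦ ?_) zero add
  rw [h g] at hy
  obtain ⟨a, ha, b, hb, rfl⟩ := Submodule.mem_sup.mp hy
  exact add a b (mem g 0 a ha.1 ha.2) (mem g 1 b hb.1 hb.2)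

theorem IsFineGrading.map_eq_or_eq_neg (hA : IsFineGrading F A) (hφ : Function.Involutive φ)
    (hφA : ∀ g, ∀ x ∈ A g, φ x ∈ A g) {g : G} (hx : x ∈ A g) : φ x = x ∨ φ x = -x := by
  rcases eq_or_ne (A g) ⊥ with hg | hg
  · simp [(Submodule.mem_bot F).mp (hg ▸ hx)]
  · exact map_eq_or_eq_neg_of_finrank_eq_one hφ (hA g hg) (hφA g) hx

theorem IsSuperinvolution.eq_zero_of_odd_of_mem_fineGrading [DecidableEq G] [NeZero (2 : F)]
    [Algebra.IsCentral F R] (hR : IsSemiprimeRing R) (hS : IsSuperGrading F S)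
    (hφ : IsSuperinvolution F S φ) (hA : IsAlgGrading F G A) (hfine : IsFineGrading F A)
    (hcompat : SuperCompatible F A S) (hφA : ∀ g, ∀ x ∈ A g, φ x ∈ A g) {g : G}
    (hxA : x ∈ A g) (hx : x ∈ S 1) : x = 0 := by
  have hpm : ∀ {g y}, y ∈ A g → φ y = y ∨ φ y = -y := hfine.map_eq_or_eq_neg hφ.invol hφA
  have hsign : ∀ g p, ∀ y ∈ A g, y ∈ S p → CommuteUpToSign x y := fun g p y hyA hy ↦
    hφ.commuteUpToSign hx hy (hpm hxA) (hpm hyA) (hpm (hA.mul_mem hxA hyA))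
  have htop : ⨆ g, A g = ⊤ := hA.internal.submodule_iSup_eq_top
  have hcomm : ∀ y, Commute (x * x) y :=
    hcompat.induction htop (fun g p y hyA hy ↦ (hsign g p y hyA hy).mul_self_commute)
      (Commute.zero_right _) fun _ _ ↦ Commute.add_right
  have hxx : x * x = 0 := hφ.mul_self_eq_zero_of_odd hS hx (hpm hxA) hcomm
  refine hR x (hcompat.induction htop ?_ (by simp) ?_)
  · exact fun g p y hyA hy ↦ (hsign g p y hyA hy).mul_mul_self_eq_zero hxx
  · exact fun y z hy hz ↦ by rw [mul_add, add_mul, hy, hz, add_zero]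

theorem no_fine_grading_with_superinvolution_general [DecidableEq G] [NeZero (2 : F)]
    [Algebra.IsCentral F R] (hR : IsSemiprimeRing R) (hS : IsSuperGrading F S) (hS₁ : S 1 ≠ ⊥)
    (hφ : IsSuperinvolution F S φ) :
    ¬ ∃ A : G → Submodule F R,
        IsAlgGrading F G A ∧ IsFineGrading F A ∧ SuperCompatible F A S ∧
        (∀ g, ∀ x ∈ A g, φ x ∈ A g) := by
  rintro ⟨A, hA, hfine, hcompat, hφA⟩
  have hodd : ∀ g, A g ⊓ S 1 = ⊥ := fun g ↦ (Submodule.eq_bot_iff _).mpr fun x hx ↦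
    hφ.eq_zero_of_odd_of_mem_fineGrading hR hS hA hfine hcompat hφA hx.1 hx.2
  have heven : ∀ g, A g ≤ S 0 := fun g ↦ by
    rw [hcompat g, hodd g, sup_bot_eq]
    exact inf_le_right
  have hS₀ : S 0 = ⊤ := top_le_iff.mp (hA.internal.submodule_iSup_eq_top ▸ iSup_le heven)
  exact hS₁ (eq_bot_of_top_isCompl (hS₀ ▸ hS.isCompl))

end Superalgebra

section MatrixSuperalgebra

variable (F : Type*) [Field F] {ι : Type*}

theorem isCompl_parSuper (π : ι → ZMod 2) : IsCompl (parSuper F π 0) (parSuper F π 1) := by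
  have hpar : ∀ p : ZMod 2, p ≠ 0 ↔ p = 1 := by decide
  constructor
  · refine Submodule.disjoint_def.mpr fun X h₀ h₁ ↦ ?_
    ext a b
    by_cases hab : π a + π b = 0
    · exact h₁ a b (by simp [hab])
    · exact h₀ a b hab
  · refine Submodule.codisjoint_iff_exists_add_eq.mpr fun X ↦
      ⟨.of fun a b ↦ if π a + π b = 0 then X a b else 0,
        .of fun a b ↦ if π a + π b = 0 then 0 else X a b, ?_, ?_, ?_⟩
    · exact fun a b hab ↦ if_neg hab
    · exact fun a b hab ↦ if_pos (not_not.mp (mt (hpar _).mp hab))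
    · ext a b
      by_cases hab : π a + π b = 0 <;> simp [hab]

theorem isSuperGrading_parSuper [Fintype ι] [DecidableEq ι] (π : ι → ZMod 2) :
    IsSuperGrading F (parSuper F π) where
  internal := (isInternal_zmod_two_iff_isCompl _).mpr (isCompl_parSuper F π)
  mul_mem {p q X Y} hX hY a c hac := by
    rw [Matrix.mul_apply]
    refine Finset.sum_eq_zero fun b _ ↦ ?_
    by_cases hab : π a + π b = p
    · have hbc : π b + π c ≠ q := fun hbc ↦ hac <| by
        rw [← hab, ← hbc, add_assoc, CharTwo.add_cancel_left]
      rw [hY b c hbc, mul_zero]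
    · rw [hX a b hab, zero_mul]

theorem parSuper_one_ne_bot {π : ι → ZMod 2} {i j : ι} (hij : π i ≠ π j) :
    parSuper F π 1 ≠ ⊥ := by
  classical
  have hpar : ∀ p q : ZMod 2, p ≠ q → p + q = 1 := by decide
  have hmem : Matrix.single i j (1 : F) ∈ parSuper F π 1 := by
    intro a b hab
    refine Matrix.single_apply_of_ne _ _ _ _ _ ?_
    rintro ⟨rfl, rfl⟩
    exact hab (hpar _ _ hij)
  intro hbot
  rw [hbot, Submodule.mem_bot] at hmem
  simpa using congrFun₂ hmem i j

end MatrixSuperalgebra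

/-- **Theorem.** Let `R = M_{n,m}(F)` be a non-trivial matrix superalgebra with a
superinvolution `*` over an algebraically closed field of characteristic zero, and `G`
a finite abelian group.  Then `R` admits no fine `G`-grading compatible with the
superalgebra structure and respected by `*`. -/
theorem no_fine_grading_with_superinvolution
    (F : Type*) [Field F] [IsAlgClosed F] [CharZero F]
    (G : Type*) [CommGroup G] [Fintype G] [DecidableEq G]
    (n m : ℕ) (hn : 0 < n) (hm : 0 < m)
    (φ : Matrix (Fin n ⊕ Fin m) (Fin n ⊕ Fin m) F →ₗ[F]
      Matrix (Fin n ⊕ Fin m) (Fin n ⊕ Fin m) F)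
    (hφ : IsSuperinvolution F (matSuper F n m) φ) :
    ¬ ∃ A : G → Submodule F (Matrix (Fin n ⊕ Fin m) (Fin n ⊕ Fin m) F),
        IsAlgGrading F G A ∧ IsFineGrading F A ∧
        SuperCompatible F A (matSuper F n m) ∧
        (∀ g, ∀ x ∈ A g, φ x ∈ A g) := by
  have : Nonempty (Fin n ⊕ Fin m) := ⟨.inl ⟨0, hn⟩⟩
  have hS₁ : matSuper F n m 1 ≠ ⊥ :=
    parSuper_one_ne_bot F (i := .inl ⟨0, hn⟩) (j := .inr ⟨0, hm⟩) (by simp [matPar])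
  exact no_fine_grading_with_superinvolution_general (isSemiprimeRing_of_isSimpleRing _)
    (isSuperGrading_parSuper F matPar) hS₁ hφ
end

section
/- Let R = M_n(F) = ⊕_{g∈G} R_g be a matrix algebra with an elementary G-grading. If the identity component R_e = A₁ ⊕ A₂ is the sum of two simple components, then there exists g ∈ G with g ≠ e such that A₁RA₂ ⊆ R_g. -/
open scoped TensorProduct

/-!
Let the grading `R_g` be determined by `t`, and for `c : G` let `e_c` be the sum of the diagonal
matrix units `E_ii` with `t i = c`. These idempotents commute with `R_1` and sum to `1`, so on a
minimal ideal of `R_1` each acts as `0` or as the identity, and some `e_c` acts as the identity.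
If `e_c` and `e_d` fix `S₁` and `S₂`, then `S₁ R S₂ = e_c S₁ R S₂ e_d ⊆ e_c R e_d ⊆ R_{c⁻¹d}`.
If moreover `c = d`, then `S₁ R S₂ = S₁ (e_c R e_c) S₂ ⊆ S₁ ∩ S₂`, because `e_c R e_c ⊆ R_1`. As the
matrix algebra is prime, `S₁ ∩ S₂ ≠ 0` and so `S₁ = S₂`. Hence `c⁻¹d ≠ 1` for distinct ideals.
-/

section MinimalIdeals

variable {K A : Type*} [Semiring K] [NonUnitalSemiring A] [Module K A]
  {B I J S T : Submodule K A}

/-- `I` is a two-sided ideal of `B`. Here `B` is meant to be a subalgebra; it need not contain a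
unit of `A`, so it is encoded as a submodule. -/
structure IsIdealOf (B I : Submodule K A) : Prop where
  le : I ≤ B
  mul_mem : ∀ x ∈ B, ∀ y ∈ I, x * y ∈ I ∧ y * x ∈ I

/-- `S` is a minimal nonzero two-sided ideal of `B`; these play the role of the simple components
of a semisimple algebra `B`. -/
def IsMinimalIdealOf (B S : Submodule K A) : Prop :=
  Minimal (fun I => I ≠ ⊥ ∧ IsIdealOf B I) S

theorem IsIdealOf.inf (hI : IsIdealOf B I) (hJ : IsIdealOf B J) : IsIdealOf B (I ⊓ J) where
  le := inf_le_left.trans hI.le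
  mul_mem x hx y hy :=
    ⟨⟨(hI.mul_mem x hx y hy.1).1, (hJ.mul_mem x hx y hy.2).1⟩,
      ⟨(hI.mul_mem x hx y hy.1).2, (hJ.mul_mem x hx y hy.2).2⟩⟩

theorem IsIdealOf.inf_eqLocus_mulLeft [SMulCommClass K A A] {e : A} (hI : IsIdealOf B I)
    (he : ∀ x ∈ B, Commute e x) :
    IsIdealOf B (I ⊓ LinearMap.eqLocus (LinearMap.mulLeft K e) LinearMap.id) where
  le := inf_le_left.trans hI.le
  mul_mem := by
    rintro x hx y ⟨hyI, hy : e * y = y⟩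
    have hxy : e * (x * y) = x * y := by rw [(he x hx).left_comm, hy]
    have hyx : e * (y * x) = y * x := by rw [← mul_assoc, hy]
    exact ⟨⟨(hI.mul_mem x hx y hyI).1, hxy⟩, ⟨(hI.mul_mem x hx y hyI).2, hyx⟩⟩

theorem isIdealOf_sup_of_annihilates (hmul : ∀ x ∈ S, ∀ y ∈ S, x * y ∈ S)
    (hann : ∀ x ∈ S, ∀ y ∈ T, x * y = 0 ∧ y * x = 0) : IsIdealOf (S ⊔ T) S where
  le := le_sup_left
  mul_mem := by
    intro z hz y hy
    obtain ⟨u, hu, v, hv, rfl⟩ := Submodule.mem_sup.mp hz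
    rw [add_mul, mul_add, (hann y hy v hv).1, (hann y hy v hv).2, add_zero, add_zero]
    exact ⟨hmul u hu y hy, hmul y hy u hu⟩

theorem isMinimalIdealOf_sup_of_annihilates (hne : S ≠ ⊥) (hmul : ∀ x ∈ S, ∀ y ∈ S, x * y ∈ S)
    (hann : ∀ x ∈ S, ∀ y ∈ T, x * y = 0 ∧ y * x = 0)
    (hsimple : ∀ I, IsIdealOf S I → I = ⊥ ∨ I = S) : IsMinimalIdealOf (S ⊔ T) S := by
  refine ⟨⟨hne, isIdealOf_sup_of_annihilates hmul hann⟩, fun I ⟨hI_ne, hI⟩ hIS => ?_⟩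
  have hI_ideal : IsIdealOf S I :=
    ⟨hIS, fun x hx => hI.mul_mem x (Submodule.mem_sup_left hx)⟩
  exact ((hsimple I hI_ideal).resolve_left hI_ne).ge

namespace IsMinimalIdealOf

theorem ne_bot (hS : IsMinimalIdealOf B S) : S ≠ ⊥ := hS.prop.1

theorem isIdealOf (hS : IsMinimalIdealOf B S) : IsIdealOf B S := hS.prop.2

theorem eq_bot_or_eq (hS : IsMinimalIdealOf B S) (hI : IsIdealOf B I) (hIS : I ≤ S) :
    I = ⊥ ∨ I = S :=
  or_iff_not_imp_left.mpr fun hI_ne => Minimal.eq_of_le hS ⟨hI_ne, hI⟩ hIS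

theorem disjoint (hS : IsMinimalIdealOf B S) (hT : IsMinimalIdealOf B T) (hne : S ≠ T) :
    Disjoint S T := by
  have hST : IsIdealOf B (S ⊓ T) := hS.isIdealOf.inf hT.isIdealOf
  rw [disjoint_iff]
  by_contra hbot
  exact hne <| ((hS.eq_bot_or_eq hST inf_le_left).resolve_left hbot).symm.trans
    ((hT.eq_bot_or_eq hST inf_le_right).resolve_left hbot)

theorem forall_mul_eq_zero_or_forall_mul_eq_self [SMulCommClass K A A] {e : A}
    (hS : IsMinimalIdealOf B S) (heB : e ∈ B) (he : IsIdempotentElem e)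
    (hcomm : ∀ x ∈ B, Commute e x) :
    (∀ x ∈ S, e * x = 0) ∨ ∀ x ∈ S, e * x = x := by
  refine (hS.eq_bot_or_eq (hS.isIdealOf.inf_eqLocus_mulLeft hcomm) inf_le_left).imp
    (fun hbot x hx => ?_) (fun heq x hx => (heq.ge hx).2)
  have hex : e * (e * x) = e * x := by rw [← mul_assoc, he.eq]
  exact (Submodule.eq_bot_iff _).mp hbot (e * x) ⟨(hS.isIdealOf.mul_mem e heB x hx).1, hex⟩

end IsMinimalIdealOf

end MinimalIdeals

theorem exists_matrix_apply_ne_zero {R m n : Type*} [Zero R] {X : Matrix m n R} (hX : X ≠ 0) :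
    ∃ i j, X i j ≠ 0 := by
  by_contra! h
  exact hX (Matrix.ext h)

theorem exists_matrix_mul_mul_ne_zero {R l m n o : Type*} [Semiring R] [NoZeroDivisors R]
    [Fintype m] [Fintype n] {X : Matrix l m R} {Y : Matrix n o R}
    (hX : X ≠ 0) (hY : Y ≠ 0) : ∃ Z : Matrix m n R, X * Z * Y ≠ 0 := by
  classical
  obtain ⟨a, b, hab⟩ := exists_matrix_apply_ne_zero hX
  obtain ⟨i, j, hij⟩ := exists_matrix_apply_ne_zero hY
  refine ⟨Matrix.single b i (1 : R), fun h => mul_ne_zero hab hij ?_⟩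
  have hentry : (X * Matrix.single b i (1 : R) * Y) a j = X a b * Y i j := by
    rw [Matrix.mul_apply, Finset.sum_eq_single i]
    · rw [Matrix.mul_single_apply_same, mul_one]
    · intro k _ hk
      rw [Matrix.mul_single_apply_of_ne _ _ _ _ _ hk, zero_mul]
    · simp
  rw [← hentry, h, Matrix.zero_apply]

section ElementaryGrading

variable {F G ι : Type*} [Field F] [DecidableEq G] [DecidableEq ι]

variable (F) in
/-- The diagonal idempotent `e_c = ∑_{t i = c} E_ii` attached to `c : G`. In the elementary grading
determined by `t`, the identity component is the product of the full matrix algebras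
`e_c * R * e_c`. -/
def blockIdempotent (t : ι → G) (c : G) : Matrix ι ι F :=
  Matrix.diagonal fun i => if t i = c then 1 else 0

theorem blockIdempotent_mem_elemGrading_one [Group G] (t : ι → G) (c : G) :
    blockIdempotent F t c ∈ elemGrading F t 1 := by
  intro i j hij
  refine Matrix.diagonal_apply_ne _ ?_
  rintro rfl
  exact hij (inv_mul_cancel (t i))

variable [Fintype ι] {t : ι → G}

theorem isIdempotentElem_blockIdempotent (t : ι → G) (c : G) :
    IsIdempotentElem (blockIdempotent F t c) := by
  simp [IsIdempotentElem, blockIdempotent]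

theorem blockIdempotent_mul_apply (t : ι → G) (c : G) (X : Matrix ι ι F) (i j : ι) :
    (blockIdempotent F t c * X) i j = if t i = c then X i j else 0 := by
  simp [blockIdempotent]

theorem mul_blockIdempotent_apply (t : ι → G) (c : G) (X : Matrix ι ι F) (i j : ι) :
    (X * blockIdempotent F t c) i j = if t j = c then X i j else 0 := by
  simp [blockIdempotent]

variable [Group G] {S S₁ S₂ : Submodule F (Matrix ι ι F)}

theorem blockIdempotent_mul_mul_blockIdempotent_mem (t : ι → G) (c d : G) (X : Matrix ι ι F) :
    blockIdempotent F t c * X * blockIdempotent F t d ∈ elemGrading F t (c⁻¹ * d) := by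
  intro i j hij
  rw [mul_blockIdempotent_apply, blockIdempotent_mul_apply]
  grind

theorem commute_blockIdempotent {X : Matrix ι ι F} (hX : X ∈ elemGrading F t 1) (c : G) :
    Commute (blockIdempotent F t c) X := by
  ext i j
  rw [blockIdempotent_mul_apply, mul_blockIdempotent_apply]
  by_cases hij : t i = t j
  · rw [hij]
  · rw [hX i j (by rwa [ne_eq, inv_mul_eq_one]), ite_self, ite_self]

namespace IsMinimalIdealOf

theorem exists_forall_blockIdempotent_mul_eq_self (hS : IsMinimalIdealOf (elemGrading F t 1) S) :
    ∃ c, ∀ X ∈ S, blockIdempotent F t c * X = X ∧ X * blockIdempotent F t c = X := by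
  obtain ⟨X, hXS, hX⟩ := Submodule.exists_mem_ne_zero_of_ne_bot hS.ne_bot
  obtain ⟨i, j, hij⟩ := exists_matrix_apply_ne_zero hX
  set e := blockIdempotent F t (t i)
  have hcomm : ∀ Y ∈ elemGrading F t 1, Commute e Y := fun Y hY => commute_blockIdempotent hY (t i)
  have hnot_zero : ¬ ∀ Y ∈ S, e * Y = 0 := fun hzero => hij <| by
    have hentry : (e * X) i j = X i j := by rw [blockIdempotent_mul_apply, if_pos rfl]
    rw [← hentry, hzero X hXS, Matrix.zero_apply]
  have hself : ∀ Y ∈ S, e * Y = Y :=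
    (hS.forall_mul_eq_zero_or_forall_mul_eq_self (blockIdempotent_mem_elemGrading_one t (t i))
      (isIdempotentElem_blockIdempotent t (t i)) hcomm).resolve_left hnot_zero
  exact ⟨t i, fun Y hY => ⟨hself Y hY, (hcomm Y (hS.isIdealOf.le hY)).eq ▸ hself Y hY⟩⟩

theorem eq_of_blockIdempotent_mul_eq_self (h₁ : IsMinimalIdealOf (elemGrading F t 1) S₁)
    (h₂ : IsMinimalIdealOf (elemGrading F t 1) S₂) {c : G}
    (hc₁ : ∀ X ∈ S₁, X * blockIdempotent F t c = X)
    (hc₂ : ∀ Y ∈ S₂, blockIdempotent F t c * Y = Y) : S₁ = S₂ := by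
  by_contra hne
  obtain ⟨X, hXS, hX⟩ := Submodule.exists_mem_ne_zero_of_ne_bot h₁.ne_bot
  obtain ⟨Y, hYS, hY⟩ := Submodule.exists_mem_ne_zero_of_ne_bot h₂.ne_bot
  obtain ⟨Z, hXZY⟩ := exists_matrix_mul_mul_ne_zero hX hY
  set e := blockIdempotent F t c
  have hZ : e * Z * e ∈ elemGrading F t 1 := by
    simpa only [inv_mul_cancel] using blockIdempotent_mul_mul_blockIdempotent_mem t c c Z
  have hXeZeY : X * (e * Z * e) * Y = X * Z * Y := by
    rw [← mul_assoc, ← mul_assoc, hc₁ X hXS, mul_assoc _ e, hc₂ Y hYS]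
  have hmem₁ : X * (e * Z * e) * Y ∈ S₁ :=
    (h₁.isIdealOf.mul_mem Y (h₂.isIdealOf.le hYS) _ (h₁.isIdealOf.mul_mem _ hZ X hXS).2).2
  have hmem₂ : X * (e * Z * e) * Y ∈ S₂ := by
    rw [mul_assoc]
    exact (h₂.isIdealOf.mul_mem X (h₁.isIdealOf.le hXS) _ (h₂.isIdealOf.mul_mem _ hZ Y hYS).1).1
  have hzero := Submodule.disjoint_def.mp (h₁.disjoint h₂ hne) _ hmem₁ hmem₂
  exact hXZY (hXeZeY ▸ hzero)

end IsMinimalIdealOf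

end ElementaryGrading

theorem product_of_simple_components_homogeneous_general {F G ι : Type*} [Field F] [Group G]
    [Fintype ι] (t : ι → G) {S₁ S₂ : Submodule F (Matrix ι ι F)}
    (h₁ : IsMinimalIdealOf (elemGrading F t 1) S₁) (h₂ : IsMinimalIdealOf (elemGrading F t 1) S₂)
    (hne : S₁ ≠ S₂) :
    ∃ g : G, g ≠ 1 ∧ ∀ a ∈ S₁, ∀ x : Matrix ι ι F, ∀ b ∈ S₂, a * x * b ∈ elemGrading F t g := by
  classical
  obtain ⟨c, hc⟩ := h₁.exists_forall_blockIdempotent_mul_eq_self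
  obtain ⟨d, hd⟩ := h₂.exists_forall_blockIdempotent_mul_eq_self
  refine ⟨c⁻¹ * d, fun hcd => hne ?_, fun a ha x b hb => ?_⟩
  · obtain rfl := inv_mul_eq_one.mp hcd
    exact h₁.eq_of_blockIdempotent_mul_eq_self h₂ (fun X hX => (hc X hX).2) fun Y hY => (hd Y hY).1
  · have haxb : blockIdempotent F t c * (a * x * b) * blockIdempotent F t d = a * x * b := by
      rw [← mul_assoc, ← mul_assoc, (hc a ha).1, mul_assoc _ b, (hd b hb).2]
    exact haxb ▸ blockIdempotent_mul_mul_blockIdempotent_mem t c d (a * x * b)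

/-- **Lemma.** Let `R = M_n(F) = ⊕_{g ∈ G} R_g` be a matrix algebra with an elementary
`G`-grading.  If the identity component `R_e = A₁ ⊕ A₂` is the sum of two simple
components, then there is `g ∈ G`, `g ≠ e`, with `A₁ R A₂ ⊆ R_g`. -/
theorem product_of_simple_components_homogeneous
    (F : Type*) [Field F]
    (G : Type*) [Group G] [DecidableEq G]
    (n : ℕ)
    (A : G → Submodule F (Matrix (Fin n) (Fin n) F))
    (hA : IsAlgGrading F G A)
    (helem : ∃ t : Fin n → G, ∀ g, A g = elemGrading F t g)
    (S₁ S₂ : Submodule F (Matrix (Fin n) (Fin n) F))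
    (hS1ne : S₁ ≠ ⊥) (hS2ne : S₂ ≠ ⊥)
    (hmul1 : ∀ x ∈ S₁, ∀ y ∈ S₁, x * y ∈ S₁)
    (hmul2 : ∀ x ∈ S₂, ∀ y ∈ S₂, x * y ∈ S₂)
    (hann : ∀ x ∈ S₁, ∀ y ∈ S₂, x * y = 0 ∧ y * x = 0)
    (hsum : A (1 : G) = S₁ ⊔ S₂) (hdisj : S₁ ⊓ S₂ = ⊥)
    (hsimple1 : ∀ I : Submodule F (Matrix (Fin n) (Fin n) F), I ≤ S₁ →
      (∀ x ∈ S₁, ∀ y ∈ I, x * y ∈ I ∧ y * x ∈ I) → I = ⊥ ∨ I = S₁)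
    (hsimple2 : ∀ I : Submodule F (Matrix (Fin n) (Fin n) F), I ≤ S₂ →
      (∀ x ∈ S₂, ∀ y ∈ I, x * y ∈ I ∧ y * x ∈ I) → I = ⊥ ∨ I = S₂) :
    ∃ g : G, g ≠ 1 ∧ ∀ a ∈ S₁, ∀ x : Matrix (Fin n) (Fin n) F, ∀ b ∈ S₂,
      a * x * b ∈ A g := by
  obtain ⟨t, ht⟩ := helem
  obtain rfl : A = elemGrading F t := funext ht
  have h₁ : IsMinimalIdealOf (elemGrading F t 1) S₁ := hsum ▸
    isMinimalIdealOf_sup_of_annihilates hS1ne hmul1 hann fun I hI => hsimple1 I hI.le hI.mul_mem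
  have h₂ : IsMinimalIdealOf (elemGrading F t 1) S₂ := hsum ▸ sup_comm S₂ S₁ ▸
    isMinimalIdealOf_sup_of_annihilates hS2ne hmul2 (fun y hy x hx => (hann x hx y hy).symm)
      fun I hI => hsimple2 I hI.le hI.mul_mem
  have hne : S₁ ≠ S₂ := fun h => hS1ne <| by rwa [← h, inf_idem] at hdisj
  exact product_of_simple_components_homogeneous_general t h₁ h₂ hne
end
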